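/- Let q ∈ ℂ with 0 < |q| < 1, let λ ∈ ℂ∖{0} with λ ∉ q^ℤ, and let t ∈ ℂ∖{0} with λt ∉ q^ℤ. Then the Appell-Lerch sum satisfies the inhomogeneous linear q-difference equation AL(qt, λ, q) + t · AL(t, λ, q) = 1. -/

import Mathlib

open Finset Filter

/-- Finite q-Pochhammer symbol `(x;q)_k = ∏_{j=0}^{k-1} (1 - x q^j)`. -/
noncomputable def qPoch (x q : ℂ) (k : ℕ) : ℂ := ∏ j ∈ Finset.range k, (1 - x * q ^ j)

/-- Infinite q-Pochhammer symbol `(x;q)_∞ = ∏_{j=0}^{∞} (1 - x q^j)`. -/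
noncomputable def qPochInf (x q : ℂ) : ℂ := ∏' j : ℕ, (1 - x * q ^ j)

/-- The Jacobi theta function `θ(t;q) = Σ_{k∈ℤ} (−1)^k q^{k(k+1)/2} t^k`. -/
noncomputable def jtheta (t q : ℂ) : ℂ :=
  ∑' k : ℤ, (-1 : ℂ) ^ k * q ^ (k * (k + 1) / 2) * t ^ k

/-- The derivative `θ'(t;q) = Σ_{k∈ℤ} (−1)^k k q^{k(k+1)/2} t^k` (with respect to t d/dt). -/
noncomputable def jthetaD (t q : ℂ) : ℂ :=
  ∑' k : ℤ, (-1 : ℂ) ^ k * (k : ℂ) * q ^ (k * (k + 1) / 2) * t ^ k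

/-- The Eisenstein-type series `E₁(q) = 1 − 4 Σ_{j=1}^∞ q^j/(1−q^j)`. -/
noncomputable def E1 (q : ℂ) : ℂ := 1 - 4 * ∑' j : ℕ, q ^ (j + 1) / (1 - q ^ (j + 1))

/-- The Appell-Lerch sum
`AL(t,λ,q) = θ(λ;q)⁻¹ Σ_{ℓ∈ℤ} (−1)^ℓ q^{ℓ(ℓ+1)/2} λ^ℓ / (1 − λ t q^ℓ)`. -/
noncomputable def AL (t lam q : ℂ) : ℂ :=
  (jtheta lam q)⁻¹ *
    ∑' k : ℤ, (-1 : ℂ) ^ k * q ^ (k * (k + 1) / 2) * lam ^ k / (1 - lam * t * q ^ k)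

/-- The solution `g^{(0,0)}(t,q) = Σ_{k≥0} (−1)^k q^{k(k+1)/2} (q;q)_k^{−2} t^{−1−k}`. -/
noncomputable def g00 (t q : ℂ) : ℂ :=
  ∑' k : ℕ, (-1 : ℂ) ^ k * q ^ (k * (k + 1) / 2) / (qPoch q q k) ^ 2 * t ^ (-1 - (k : ℤ))

/-- The solution `g^{(0,1)}(t,q)`. -/
noncomputable def g01 (t q : ℂ) : ℂ :=
  ∑' k : ℕ,
    (E1 q / 2 - 1 / 2 - jthetaD t⁻¹ q / jtheta t⁻¹ q +
        ∑ j ∈ Finset.range k, (1 + q ^ (j + 1)) / (1 - q ^ (j + 1))) *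
      ((-1 : ℂ) ^ k * q ^ (k * (k + 1) / 2) / (qPoch q q k) ^ 2 * t ^ (-1 - (k : ℤ)))

/-!
Write `θ_k` for the `k`-th term of `θ(λ;q)`. Since `θ_{k+1} = -λ q^{k+1} θ_k`, shifting the
summation index by one in `t · AL(t, λ, q)` makes its denominators agree with those of
`AL(qt, λ, q)`, and the `k`-th terms add up to `θ_k (1 - λ t q^{k+1}) / (1 - λ t q^{k+1}) = θ_k`.
So `θ(λ;q)` times the left-hand side is `θ(λ;q)`, and what remains is `θ(λ;q) ≠ 0`. This follows
from the Jacobi triple product `θ(λ;q) = (q;q)_∞ (λq;q)_∞ (λ⁻¹;q)_∞`, obtained by dominated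
convergence from the finite identity `∑_k θ_k [2n choose n+k]_q = (λq;q)_n (λ⁻¹;q)_n`.
-/

open scoped Topology

/-- The summand `(−1)^k q^{k(k+1)/2} x^k` of the theta series `jtheta x q`. -/
noncomputable def jthetaTerm (x q : ℂ) (k : ℤ) : ℂ :=
  (-1 : ℂ) ^ k * q ^ (k * (k + 1) / 2) * x ^ k

/-- The reciprocal `1 / (q;q)_m`, with the usual convention that it vanishes for `m < 0`. -/
noncomputable def recipQPoch (q : ℂ) : ℤ → ℂ
  | .ofNat n => (qPoch q q n)⁻¹
  | .negSucc _ => 0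

/-- The Gaussian binomial coefficient `[2n choose n+k]_q = (q;q)_{2n} / ((q;q)_{n+k} (q;q)_{n-k})`,
indexed by its distance `k` from the centre so that it is symmetric in `k`; it vanishes for
`|k| > n`. The quotient takes junk values when `q` is a root of unity. -/
noncomputable def centralQBinom (q : ℂ) (n : ℕ) (k : ℤ) : ℂ :=
  qPoch q q (2 * n) * (recipQPoch q (n + k) * recipQPoch q (n - k))

lemma mul_pow_self_ne_one {M : Type*} [Monoid M] {a : M} (ha : ¬IsOfFinOrder a) (n : ℕ) :
    a * a ^ n ≠ 1 := fun h =>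
  ha (isOfFinOrder_iff_pow_eq_one.2 ⟨n + 1, n.succ_pos, by rw [pow_succ', h]⟩)

lemma not_isOfFinOrder_of_norm_lt_one {K : Type*} [NormedDivisionRing K] {a : K} (ha : ‖a‖ < 1) :
    ¬IsOfFinOrder a := fun h =>
  ha.ne h.norm_eq_one

lemma summable_norm_neg_mul_pow {K : Type*} [NormedDivisionRing K] {a : K} (ha : ‖a‖ < 1) (x : K) :
    Summable fun j : ℕ => ‖-(x * a ^ j)‖ := by
  simpa only [norm_neg, norm_mul, norm_pow] using
    (summable_geometric_of_lt_one (norm_nonneg a) ha).mul_left ‖x‖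

section Pochhammer

variable {x q : ℂ}

lemma qPoch_succ (x q : ℂ) (n : ℕ) : qPoch x q (n + 1) = qPoch x q n * (1 - x * q ^ n) :=
  Finset.prod_range_succ _ _

lemma tendsto_qPoch (hq : ‖q‖ < 1) (x : ℂ) :
    Tendsto (qPoch x q) atTop (𝓝 (qPochInf x q)) := by
  have hmul := multipliable_one_add_of_summable (summable_norm_neg_mul_pow hq x)
  simp only [← sub_eq_add_neg] at hmul
  exact hmul.tendsto_prod_tprod_nat

lemma qPochInf_ne_zero (hq : ‖q‖ < 1) (hx : ∀ j : ℕ, x * q ^ j ≠ 1) : qPochInf x q ≠ 0 := by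
  have hne := tprod_one_add_ne_zero_of_summable
    (fun j => by rw [← sub_eq_add_neg]; exact sub_ne_zero.2 (hx j).symm)
    (summable_norm_neg_mul_pow hq x)
  simpa only [qPochInf, ← sub_eq_add_neg] using hne

lemma qPochInf_self_ne_zero (hq : ‖q‖ < 1) : qPochInf q q ≠ 0 :=
  qPochInf_ne_zero hq (mul_pow_self_ne_one (not_isOfFinOrder_of_norm_lt_one hq))

lemma recipQPoch_of_neg {m : ℤ} (hm : m < 0) : recipQPoch q m = 0 := by
  obtain ⟨n, rfl⟩ := Int.eq_negSucc_of_lt_zero hm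
  rfl

lemma recipQPoch_eq_mul_succ (hq : ¬IsOfFinOrder q) (m : ℤ) :
    recipQPoch q m = (1 - q ^ (m + 1)) * recipQPoch q (m + 1) := by
  match m with
  | .ofNat n =>
    have hfactor : 1 - q * q ^ n ≠ 0 := sub_ne_zero.2 (mul_pow_self_ne_one hq n).symm
    change (qPoch q q n)⁻¹ = (1 - q ^ (n + 1)) * (qPoch q q (n + 1))⁻¹
    rw [qPoch_succ, pow_succ', mul_inv_rev, mul_inv_cancel_left₀ hfactor]
  | .negSucc 0 => simp [recipQPoch]
  | .negSucc (n + 1) => exact (mul_zero _).symm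

lemma tendsto_recipQPoch (hq : ‖q‖ < 1) :
    Tendsto (recipQPoch q) atTop (𝓝 (qPochInf q q)⁻¹) := by
  rw [← Nat.map_cast_int_atTop, tendsto_map'_iff]
  exact (tendsto_qPoch hq q).inv₀ (qPochInf_self_ne_zero hq)

lemma exists_norm_recipQPoch_le (hq : ‖q‖ < 1) : ∃ C, ∀ m, ‖recipQPoch q m‖ ≤ C := by
  obtain ⟨C, hC⟩ :=
    ((tendsto_qPoch hq q).inv₀ (qPochInf_self_ne_zero hq)).norm.bddAbove_range
  have hnat (n : ℕ) : ‖(qPoch q q n)⁻¹‖ ≤ C := hC ⟨n, rfl⟩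
  refine ⟨C, fun m => ?_⟩
  match m with
  | .ofNat n => exact hnat n
  | .negSucc _ => exact norm_zero.trans_le ((norm_nonneg _).trans (hnat 0))

end Pochhammer

section CentralQBinom

variable {q : ℂ}

lemma centralQBinom_zero (q : ℂ) (k : ℤ) : centralQBinom q 0 k = if k = 0 then 1 else 0 := by
  rcases lt_trichotomy k 0 with hk | rfl | hk
  · simp [centralQBinom, recipQPoch_of_neg hk, hk.ne]
  · simp [centralQBinom, recipQPoch, qPoch]
  · simp [centralQBinom, recipQPoch_of_neg (neg_lt_zero.2 hk), hk.ne']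

-- After division by `(q;q)_{2n} / ((q;q)_{n+1+k} (q;q)_{n+1-k})` this is a polynomial identity in
-- `q⁻¹`, `q ^ (n + 1 + k)` and `q ^ (n + 1 - k)`.
lemma centralQBinom_succ (hq0 : q ≠ 0) (hq : ¬IsOfFinOrder q) (n : ℕ) (k : ℤ) :
    centralQBinom q (n + 1) k = (1 + q ^ (2 * n + 1)) * centralQBinom q n k +
      q ^ (n + 1 - k) * centralQBinom q n (k - 1) +
      q ^ (n + 1 + k) * centralQBinom q n (k + 1) := by
  have hup : recipQPoch q (n + k) = (1 - q ^ (n + 1 + k)) * recipQPoch q (n + 1 + k) := by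
    rw [recipQPoch_eq_mul_succ hq, add_right_comm]
  have hdown : recipQPoch q (n - k) = (1 - q ^ (n + 1 - k)) * recipQPoch q (n + 1 - k) := by
    rw [recipQPoch_eq_mul_succ hq, sub_add_eq_add_sub]
  have hup' : recipQPoch q (n + (k - 1)) = (1 - q ^ (n + 1 + k) / q) * recipQPoch q (n + k) := by
    rw [recipQPoch_eq_mul_succ hq, div_eq_mul_inv, ← zpow_sub_one₀ hq0]
    ring_nf
  have hdown' : recipQPoch q (n - (k + 1)) = (1 - q ^ (n + 1 - k) / q) * recipQPoch q (n - k) := by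
    rw [recipQPoch_eq_mul_succ hq, div_eq_mul_inv, ← zpow_sub_one₀ hq0]
    ring_nf
  have hprod : q ^ (n + 1 + k) * q ^ (n + 1 - k) = q ^ (2 * n + 2) := by
    rw [← zpow_add₀ hq0, ← zpow_natCast]
    push_cast
    ring_nf
  have hpoch : qPoch q q (2 * (n + 1)) =
      qPoch q q (2 * n) * (1 - q ^ (2 * n + 1)) * (1 - q ^ (2 * n + 2)) := by
    rw [mul_add_one, qPoch_succ, qPoch_succ, ← pow_succ', ← pow_succ']
  have hodd : q ^ (2 * n + 1) = q ^ (n + 1 + k) * q ^ (n + 1 - k) / q := by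
    rw [hprod, pow_succ q (2 * n + 1), mul_div_cancel_right₀ _ hq0]
  simp only [centralQBinom, Nat.cast_succ, hpoch]
  rw [hup', hdown', show (n : ℤ) - (k - 1) = n + 1 - k by ring,
    show (n : ℤ) + (k + 1) = n + 1 + k by ring, hup, hdown, ← hprod, hodd]
  field_simp
  ring

lemma tendsto_centralQBinom (hq : ‖q‖ < 1) (k : ℤ) :
    Tendsto (fun n => centralQBinom q n k) atTop (𝓝 (qPochInf q q)⁻¹) := by
  have hcast : Tendsto (fun n : ℕ => (n : ℤ)) atTop atTop := tendsto_natCast_atTop_atTop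
  have hlim := ((tendsto_qPoch hq q).comp (tendsto_id.const_mul_atTop' two_pos)).mul
    (((tendsto_recipQPoch hq).comp (tendsto_atTop_add_const_right _ k hcast)).mul
      ((tendsto_recipQPoch hq).comp (tendsto_atTop_add_const_right _ (-k) hcast)))
  rwa [mul_inv_cancel_left₀ (qPochInf_self_ne_zero hq)] at hlim

lemma exists_norm_centralQBinom_le (hq : ‖q‖ < 1) : ∃ C, ∀ n k, ‖centralQBinom q n k‖ ≤ C := by
  obtain ⟨A, hA⟩ := (tendsto_qPoch hq q).norm.bddAbove_range
  obtain ⟨B, hB⟩ := exists_norm_recipQPoch_le hq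
  have hA' (n : ℕ) : ‖qPoch q q n‖ ≤ A := hA ⟨n, rfl⟩
  have hA0 : 0 ≤ A := (norm_nonneg _).trans (hA' 0)
  have hB0 : 0 ≤ B := (norm_nonneg _).trans (hB 0)
  refine ⟨A * (B * B), fun n k => ?_⟩
  rw [centralQBinom, norm_mul, norm_mul]
  gcongr
  exacts [hA' _, hB _, hB _]

end CentralQBinom

section JacobiTripleProduct

variable {x q : ℂ}

lemma jthetaTerm_ne_zero (hx : x ≠ 0) (hq0 : q ≠ 0) (k : ℤ) : jthetaTerm x q k ≠ 0 :=
  mul_ne_zero (mul_ne_zero (zpow_ne_zero _ (neg_ne_zero.2 one_ne_zero)) (zpow_ne_zero _ hq0))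
    (zpow_ne_zero _ hx)

lemma jthetaTerm_succ (hx : x ≠ 0) (hq0 : q ≠ 0) (k : ℤ) :
    jthetaTerm x q (k + 1) = -(x * q ^ (k + 1) * jthetaTerm x q k) := by
  have hexp : (k + 1) * (k + 1 + 1) / 2 = k * (k + 1) / 2 + (k + 1) := by
    rw [show (k + 1) * (k + 1 + 1) = k * (k + 1) + 2 * (k + 1) by ring,
      Int.add_mul_ediv_left _ _ two_ne_zero]
  rw [jthetaTerm, jthetaTerm, hexp, zpow_add₀ hq0, zpow_add_one₀ hx,
    zpow_add_one₀ (neg_ne_zero.2 one_ne_zero)]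
  ring

lemma jthetaTerm_neg (hq0 : q ≠ 0) (k : ℤ) :
    jthetaTerm x q (-k) = q ^ (-k) * jthetaTerm x⁻¹ q k := by
  have hexp : -k * (-k + 1) / 2 = k * (k + 1) / 2 + -k := by
    rw [show -k * (-k + 1) = k * (k + 1) + 2 * -k by ring,
      Int.add_mul_ediv_left _ _ two_ne_zero]
  rw [jthetaTerm, jthetaTerm, hexp, zpow_add₀ hq0, inv_zpow', zpow_neg (-1 : ℂ), ← inv_zpow,
    inv_neg_one]
  ring

lemma summable_nat_jthetaTerm (hx : x ≠ 0) (hq0 : q ≠ 0) (hq : ‖q‖ < 1) :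
    Summable fun n : ℕ => jthetaTerm x q n := by
  refine summable_of_ratio_test_tendsto_lt_one zero_lt_one
    (Eventually.of_forall fun n => jthetaTerm_ne_zero hx hq0 n) ?_
  have hratio (n : ℕ) :
      ‖jthetaTerm x q (n + 1 : ℕ)‖ / ‖jthetaTerm x q n‖ = ‖x‖ * ‖q‖ ^ (n + 1) := by
    rw [Nat.cast_succ, jthetaTerm_succ hx hq0, norm_neg, norm_mul,
      mul_div_cancel_right₀ _ (norm_ne_zero_iff.2 (jthetaTerm_ne_zero hx hq0 n)), norm_mul,
      ← Nat.cast_succ, zpow_natCast, norm_pow]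
  have hlim := ((tendsto_pow_atTop_nhds_zero_of_lt_one (norm_nonneg q) hq).comp
    (tendsto_add_atTop_nat 1)).const_mul ‖x‖
  rw [mul_zero] at hlim
  exact hlim.congr fun n => (hratio n).symm

lemma summable_jthetaTerm (hx : x ≠ 0) (hq0 : q ≠ 0) (hq : ‖q‖ < 1) :
    Summable (jthetaTerm x q) := by
  refine .of_nat_of_neg (summable_nat_jthetaTerm hx hq0 hq) ?_
  have hneg (n : ℕ) : jthetaTerm x q (-n) = jthetaTerm (x * q)⁻¹ q n := by
    rw [jthetaTerm_neg hq0, jthetaTerm, jthetaTerm, mul_inv, mul_zpow, inv_zpow', inv_zpow']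
    ring
  simp only [hneg]
  exact summable_nat_jthetaTerm (inv_ne_zero (mul_ne_zero hx hq0)) hq0 hq

lemma qPoch_mul_qPoch_inv_succ (hx : x ≠ 0) (n : ℕ) :
    qPoch (x * q) q (n + 1) * qPoch x⁻¹ q (n + 1) =
      (1 + q ^ (2 * n + 1) - x * q ^ (n + 1) - x⁻¹ * q ^ n) *
        (qPoch (x * q) q n * qPoch x⁻¹ q n) := by
  rw [qPoch_succ, qPoch_succ]
  field_simp
  ring

lemma jthetaTerm_mul_centralQBinom_succ (hx : x ≠ 0) (hq0 : q ≠ 0) (hq : ¬IsOfFinOrder q)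
    (n : ℕ) (k : ℤ) :
    jthetaTerm x q k * centralQBinom q (n + 1) k =
      (1 + q ^ (2 * n + 1)) * (jthetaTerm x q k * centralQBinom q n k) -
        x * q ^ (n + 1) * (jthetaTerm x q (k - 1) * centralQBinom q n (k - 1)) -
        x⁻¹ * q ^ n * (jthetaTerm x q (k + 1) * centralQBinom q n (k + 1)) := by
  have hleft : x * q ^ (n + 1) * jthetaTerm x q (k - 1) =
      -(q ^ (n + 1 - k) * jthetaTerm x q k) := by
    have hpow : q ^ (n + 1) = q ^ (n + 1 - k) * q ^ k := by
      rw [← zpow_add₀ hq0, sub_add_cancel]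
      exact mod_cast rfl
    have hterm := jthetaTerm_succ hx hq0 (k - 1)
    rw [sub_add_cancel] at hterm
    rw [hterm, hpow]
    ring
  have hright : x⁻¹ * q ^ n * jthetaTerm x q (k + 1) = -(q ^ (n + 1 + k) * jthetaTerm x q k) := by
    have hpow : q ^ (n + 1 + k) = q ^ n * q ^ (k + 1) := by
      rw [← zpow_natCast, ← zpow_add₀ hq0, add_assoc, add_comm 1 k]
    rw [jthetaTerm_succ hx hq0, hpow]
    field_simp
  rw [centralQBinom_succ hq0 hq]
  linear_combination centralQBinom q n (k - 1) * hleft + centralQBinom q n (k + 1) * hright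

lemma hasSum_finite_jacobi_triple_product (hx : x ≠ 0) (hq0 : q ≠ 0) (hq : ¬IsOfFinOrder q)
    (n : ℕ) :
    HasSum (fun k => jthetaTerm x q k * centralQBinom q n k)
      (qPoch (x * q) q n * qPoch x⁻¹ q n) := by
  induction n with
  | zero =>
    have hzero : jthetaTerm x q 0 = 1 := by simp [jthetaTerm]
    simpa [centralQBinom_zero, qPoch, hzero] using
      hasSum_single (f := fun k => jthetaTerm x q k * centralQBinom q 0 k) 0
        fun k hk => by simp [centralQBinom_zero, hk]
  | succ n ih =>
    have hleft := (Equiv.subRight (1 : ℤ)).hasSum_iff.2 ih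
    have hright := (Equiv.addRight (1 : ℤ)).hasSum_iff.2 ih
    rw [qPoch_mul_qPoch_inv_succ hx, sub_mul, sub_mul]
    simp only [jthetaTerm_mul_centralQBinom_succ hx hq0 hq n]
    exact ((ih.mul_left _).sub (hleft.mul_left _)).sub (hright.mul_left _)

theorem jacobi_triple_product (hx : x ≠ 0) (hq0 : q ≠ 0) (hq : ‖q‖ < 1) :
    jtheta x q = qPochInf q q * (qPochInf (x * q) q * qPochInf x⁻¹ q) := by
  obtain ⟨C, hC⟩ := exists_norm_centralQBinom_le hq
  have hsum : Tendsto (fun n => ∑' k, jthetaTerm x q k * centralQBinom q n k) atTop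
      (𝓝 (∑' k, jthetaTerm x q k * (qPochInf q q)⁻¹)) :=
    tendsto_tsum_of_dominated_convergence ((summable_jthetaTerm hx hq0 hq).norm.mul_right C)
      (fun k => (tendsto_centralQBinom hq k).const_mul _)
      (Eventually.of_forall fun n k => by
        rw [norm_mul]
        gcongr
        exact hC n k)
  have hprod := (tendsto_qPoch hq (x * q)).mul (tendsto_qPoch hq x⁻¹)
  have hlim : jtheta x q * (qPochInf q q)⁻¹ = qPochInf (x * q) q * qPochInf x⁻¹ q := by
    rw [tsum_mul_right] at hsum
    refine tendsto_nhds_unique hsum (hprod.congr fun n => ?_)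
    exact (hasSum_finite_jacobi_triple_product hx hq0
      (not_isOfFinOrder_of_norm_lt_one hq) n).tsum_eq.symm
  rw [← hlim, mul_left_comm, mul_inv_cancel₀ (qPochInf_self_ne_zero hq), mul_one]

theorem jtheta_ne_zero (hx : x ≠ 0) (hq0 : q ≠ 0) (hq : ‖q‖ < 1) (hxq : ∀ n : ℤ, x ≠ q ^ n) :
    jtheta x q ≠ 0 := by
  rw [jacobi_triple_product hx hq0 hq]
  refine mul_ne_zero (qPochInf_self_ne_zero hq)
    (mul_ne_zero (qPochInf_ne_zero hq fun j hj => ?_) (qPochInf_ne_zero hq fun j hj => ?_))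
  · rw [mul_assoc, ← pow_succ'] at hj
    exact hxq (-(j + 1 : ℕ)) (by rw [zpow_neg, zpow_natCast, eq_inv_of_mul_eq_one_left hj])
  · exact hxq j (by rw [zpow_natCast, (inv_mul_eq_one₀ hx).1 hj])

end JacobiTripleProduct

section AppellLerch

variable {lam t u q : ℂ}

lemma summable_nat_jthetaTerm_div (hlam : lam ≠ 0) (hq0 : q ≠ 0) (hq : ‖q‖ < 1) (u : ℂ) :
    Summable fun n : ℕ => jthetaTerm lam q n / (1 - u * q ^ (n : ℤ)) := by
  have hlim : Tendsto (fun n : ℕ => (1 - u * q ^ (n : ℤ))⁻¹) atTop (𝓝 (1 - u * 0)⁻¹) := by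
    simp only [zpow_natCast]
    exact (((tendsto_pow_atTop_nhds_zero_of_norm_lt_one hq).const_mul u).const_sub 1).inv₀
      (by simp)
  refine summable_of_isBigO_nat (summable_nat_jthetaTerm hlam hq0 hq).norm ?_
  simpa only [div_eq_mul_inv, mul_one] using
    (Asymptotics.isBigO_refl (fun n : ℕ => jthetaTerm lam q n) atTop).norm_right.mul
      (hlim.isBigO_one ℝ)

lemma jthetaTerm_neg_div (hq0 : q ≠ 0) (hu : u ≠ 0) (k : ℤ) :
    jthetaTerm lam q (-k) / (1 - u * q ^ (-k)) =
      -u⁻¹ * (jthetaTerm lam⁻¹ q k / (1 - u⁻¹ * q ^ k)) := by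
  have hqk : q ^ k ≠ 0 := zpow_ne_zero k hq0
  have hden : 1 - u * q ^ (-k) = -u * q ^ (-k) * (1 - u⁻¹ * q ^ k) := by
    rw [zpow_neg]
    field_simp
    ring
  rw [jthetaTerm_neg hq0, hden, zpow_neg]
  field_simp

lemma summable_jthetaTerm_div (hlam : lam ≠ 0) (hq0 : q ≠ 0) (hq : ‖q‖ < 1) (u : ℂ) :
    Summable fun k : ℤ => jthetaTerm lam q k / (1 - u * q ^ k) := by
  rcases eq_or_ne u 0 with rfl | hu
  · simpa only [zero_mul, sub_zero, div_one] using summable_jthetaTerm hlam hq0 hq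
  refine .of_nat_of_neg (summable_nat_jthetaTerm_div hlam hq0 hq u) ?_
  simp only [jthetaTerm_neg_div hq0 hu]
  exact (summable_nat_jthetaTerm_div (inv_ne_zero hlam) hq0 hq u⁻¹).mul_left _

lemma jthetaTerm_div_add_mul_succ (hlam : lam ≠ 0) (hq0 : q ≠ 0) {k : ℤ}
    (hden : 1 - lam * t * q ^ (k + 1) ≠ 0) :
    jthetaTerm lam q k / (1 - lam * (q * t) * q ^ k) +
      t * (jthetaTerm lam q (k + 1) / (1 - lam * t * q ^ (k + 1))) = jthetaTerm lam q k := by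
  rw [show lam * (q * t) * q ^ k = lam * t * q ^ (k + 1) by rw [zpow_add_one₀ hq0]; ring,
    jthetaTerm_succ hlam hq0]
  field_simp
  ring

lemma tsum_jthetaTerm_div_add_mul (hlam : lam ≠ 0) (hq0 : q ≠ 0) (hq : ‖q‖ < 1)
    (hlamt : ∀ n : ℤ, lam * t ≠ q ^ n) :
    ∑' k, jthetaTerm lam q k / (1 - lam * (q * t) * q ^ k) +
      t * ∑' k, jthetaTerm lam q k / (1 - lam * t * q ^ k) = jtheta lam q := by
  have hden (k : ℤ) : 1 - lam * t * q ^ k ≠ 0 := fun h =>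
    hlamt (-k) (by rw [zpow_neg, eq_inv_of_mul_eq_one_left (sub_eq_zero.1 h).symm])
  have hsum := summable_jthetaTerm_div hlam hq0 hq (lam * (q * t))
  have hshift := (Equiv.addRight (1 : ℤ)).summable_iff.2
    (summable_jthetaTerm_div hlam hq0 hq (lam * t))
  rw [← (Equiv.addRight (1 : ℤ)).tsum_eq fun k => jthetaTerm lam q k / (1 - lam * t * q ^ k),
    ← tsum_mul_left]
  exact (hsum.tsum_add (hshift.mul_left t)).symm.trans
    (tsum_congr fun k => jthetaTerm_div_add_mul_succ hlam hq0 (hden (k + 1)))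

lemma AL_eq_tsum_jthetaTerm (t lam q : ℂ) :
    AL t lam q = (jtheta lam q)⁻¹ * ∑' k, jthetaTerm lam q k / (1 - lam * t * q ^ k) :=
  rfl

end AppellLerch

/-- The Appell-Lerch sum satisfies the inhomogeneous linear q-difference equation
`AL(qt, λ, q) + t · AL(t, λ, q) = 1`. -/
theorem appell_lerch_qdifference
    (q : ℂ) (hq0 : 0 < ‖q‖) (hq1 : ‖q‖ < 1)
    (lam : ℂ) (hlam : lam ≠ 0) (hlamq : ∀ n : ℤ, lam ≠ q ^ n)
    (t : ℂ) (ht : t ≠ 0) (hlamt : ∀ n : ℤ, lam * t ≠ q ^ n) :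
    AL (q * t) lam q + t * AL t lam q = 1 := by
  have hq : q ≠ 0 := norm_pos_iff.1 hq0
  rw [AL_eq_tsum_jthetaTerm, AL_eq_tsum_jthetaTerm, mul_left_comm t, ← mul_add,
    tsum_jthetaTerm_div_add_mul hlam hq hq1 hlamt,
    inv_mul_cancel₀ (jtheta_ne_zero hlam hq hq1 hlamq)]
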